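/- arXiv:2505.03954 — 2 statements merged into one kernel-verified Lean document; each statement's English description precedes it below -/
import Mathlib

section
/- Let $n \ge 2k \ge 2$ be integers, let $S$ be a set, and let $F : \{0,1\}^n \to S$ be a function such that $F(x_1,\dots,x_n)$ depends only on the coordinates $x_1,\dots,x_s$. Let $\vec\sigma$ be a uniformly random vector in $\{0,1\}^n$ with exactly $k$ ones, and let $\vec\beta$ be a vector of $n$ independent Bernoulli($k/n$) random variables. Then the total variation distance between the distributions of $F(\vec\sigma)$ and $F(\vec\beta)$ is at most $(\max(s, 2n/k) - 1)/(n-1)$. -/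
open Finset
open scoped Classical

/-!
Restrict `σ` and `β` to the `t` coordinates that `F` depends on. Given its number of ones, either
restriction is uniform, so only these numbers of ones matter: a hypergeometric variable `W` for `σ`
and a binomial one for `β`.

This comparison is by Stein's method. The binomial law is reversible for the birth-death chain with
rates `p * (t - j)` and `(1 - p) * j`, where `p = k / n`, and the hypergeometric law for the chain
with rates `(k - j) * (t - j)` and `j * (n - k - t + j)`. Each of the latter is `n` times the former
minus the same quantity `j * (t - j)`, so the Stein equation `L g = r - μ` of the binomial chain
turns `n * (E r(W) - μ)` into the mean of `W * (t - W) * (g (W + 1) - g W)`. The increments of `g`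
are at most `1 / (t * p * (1 - p))` in absolute value, and `E [W * (t - W)]` is
`n * t * p * (1 - p) * (t - 1) / (n - 1)`.
-/

section Stein

/-- The chain on `{0, …, t}` with upward rates `birth` and downward rates `death` stays in that
interval and satisfies the detailed balance equations with respect to `π`. -/
structure BirthDeathReversible (t : ℕ) (birth death π : ℕ → ℝ) : Prop where
  death_zero : death 0 = 0
  birth_last : birth t = 0
  balance : ∀ j < t, birth j * π j = death (j + 1) * π (j + 1)

/-- A birth-death chain with antitone birth rates and monotone death rates, together with its
reversible probability distribution `π`. Stein solutions of such a chain have small increments. -/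
structure MonotoneBirthDeath (t : ℕ) (birth death π : ℕ → ℝ) : Prop
    extends BirthDeathReversible t birth death π where
  pos : ∀ j ≤ t, 0 < π j
  sum_eq_one : ∑ j ∈ range (t + 1), π j = 1
  birth_pos : ∀ j < t, 0 < birth j
  birth_antitone : Antitone birth
  death_monotone : Monotone death

/-- The mass that `π` gives to `{0, …, x - 1}`. -/
def headMass (π : ℕ → ℝ) (x : ℕ) : ℝ := ∑ i ∈ range x, π i

/-- The sum over `i < x` of `π i * (r i - μ)`, where `μ` is the mean of `r` under `π`. -/
def centeredSum (t : ℕ) (π r : ℕ → ℝ) (x : ℕ) : ℝ :=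
  ∑ i ∈ range x, π i * (r i - ∑ j ∈ range (t + 1), π j * r j)

/-- The solution `g` of the Stein equation `birth j * g (j + 1) - death j * g j = r j - μ` on
`{0, …, t}`, where `μ` is the mean of `r` under `π`. Its junk values at `0` and `t + 1` are
multiplied there by `death 0 = 0` and `birth t = 0`. -/
noncomputable def steinSolution (t : ℕ) (death π r : ℕ → ℝ) (x : ℕ) : ℝ :=
  centeredSum t π r x / (death x * π x)

/-- The coefficient of `r i` in `π x * (g (x + 1) - g x)`, for `g` the Stein solution. -/
noncomputable def incrementCoeff (birth death π : ℕ → ℝ) (x i : ℕ) : ℝ :=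
  π i * (((if i < x + 1 then 1 else 0) - headMass π (x + 1)) / birth x
    - ((if i < x then 1 else 0) - headMass π x) / death x)

variable {t : ℕ} {birth death π : ℕ → ℝ}

lemma headMass_succ (π : ℕ → ℝ) (x : ℕ) : headMass π (x + 1) = headMass π x + π x :=
  sum_range_succ π x

namespace BirthDeathReversible

lemma sum_range_stein (h : BirthDeathReversible t birth death π) (g : ℕ → ℝ) {x : ℕ}
    (hx : x ≤ t) :
    ∑ j ∈ range x, π j * (birth j * g (j + 1) - death j * g j) = death x * π x * g x := by
  induction x with
  | zero => simp [h.death_zero]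
  | succ x ih =>
    rw [sum_range_succ, ih (by omega)]
    linear_combination g (x + 1) * h.balance x hx

lemma sum_stein (h : BirthDeathReversible t birth death π) (g : ℕ → ℝ) :
    ∑ j ∈ range (t + 1), π j * (birth j * g (j + 1) - death j * g j) = 0 := by
  rw [sum_range_succ, h.sum_range_stein g le_rfl, h.birth_last]
  ring

end BirthDeathReversible

lemma sum_range_eq_sum_ite {R : Type*} [NonAssocSemiring R] {x t : ℕ} (hx : x ≤ t)
    (f : ℕ → R) :
    ∑ i ∈ range x, f i = ∑ i ∈ range t, (if i < x then 1 else 0) * f i := by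
  simp only [ite_mul, one_mul, zero_mul, ← sum_filter]
  congr 1
  ext i
  simp only [mem_filter, mem_range]
  omega

lemma centeredSum_eq_sum {x : ℕ} (hx : x ≤ t + 1) (r : ℕ → ℝ) :
    centeredSum t π r x =
      ∑ i ∈ range (t + 1), π i * ((if i < x then 1 else 0) - headMass π x) * r i := by
  have hhead := sum_range_eq_sum_ite hx fun i => π i * r i
  simp only [centeredSum, mul_sub, sub_mul, sum_sub_distrib, hhead, ← sum_mul]
  congr 1
  · exact sum_congr rfl fun i _ => by ring
  · rw [← headMass, mul_sum]
    exact sum_congr rfl fun i _ => by ring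

lemma abs_sum_mul_le_of_sum_eq_zero {R α : Type*} [CommRing R] [LinearOrder R]
    [IsStrictOrderedRing R] {s : Finset α} {c r : α → R} {x : α} (hx : x ∈ s)
    (hsum : ∑ i ∈ s, c i = 0) (hc : ∀ i ∈ s, i ≠ x → c i ≤ 0)
    (hr : ∀ i ∈ s, r i ∈ Set.Icc (0 : R) 1) :
    |∑ i ∈ s, c i * r i| ≤ c x := by
  have upper : ∀ u : α → R, (∀ i ∈ s, u i ∈ Set.Icc (0 : R) 1) → ∑ i ∈ s, c i * u i ≤ c x := by
    intro u hu
    have hcx : 0 ≤ c x := by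
      rw [← add_sum_erase s c hx] at hsum
      have := sum_nonpos fun i hi => hc i (mem_of_mem_erase hi) (ne_of_mem_erase hi)
      linarith
    rw [← add_sum_erase s _ hx]
    have hrest : ∑ i ∈ s.erase x, c i * u i ≤ 0 := sum_nonpos fun i hi =>
      mul_nonpos_of_nonpos_of_nonneg (hc i (mem_of_mem_erase hi) (ne_of_mem_erase hi))
        (hu i (mem_of_mem_erase hi)).1
    linarith [mul_le_of_le_one_right hcx (hu x hx).2]
  have hcompl : ∑ i ∈ s, c i * (1 - r i) = -∑ i ∈ s, c i * r i := by
    simp only [mul_sub, mul_one, sum_sub_distrib, hsum, zero_sub]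
  have lower := upper (fun i => 1 - r i) fun i hi =>
    ⟨sub_nonneg.2 (hr i hi).2, sub_le_self 1 (hr i hi).1⟩
  rw [abs_le]
  exact ⟨by linarith, upper r hr⟩

namespace MonotoneBirthDeath

lemma death_pos (h : MonotoneBirthDeath t birth death π) {x : ℕ} (hx : 0 < x) (hxt : x ≤ t) :
    0 < death x := by
  obtain ⟨j, rfl⟩ := Nat.exists_eq_add_one_of_ne_zero hx.ne'
  have hflow : 0 < death (j + 1) * π (j + 1) := by
    rw [← h.balance j hxt]
    exact mul_pos (h.birth_pos j hxt) (h.pos j (by omega))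
  exact pos_of_mul_pos_left hflow (h.pos (j + 1) hxt).le

lemma death_mul_steinSolution (h : MonotoneBirthDeath t birth death π) (r : ℕ → ℝ) {x : ℕ}
    (hx : x ≤ t) :
    death x * π x * steinSolution t death π r x = centeredSum t π r x := by
  rcases Nat.eq_zero_or_pos x with rfl | hx0
  · simp [h.death_zero, centeredSum]
  · exact mul_div_cancel₀ _ (mul_pos (h.death_pos hx0 hx) (h.pos x hx)).ne'

lemma centeredSum_last (h : MonotoneBirthDeath t birth death π) (r : ℕ → ℝ) :
    centeredSum t π r (t + 1) = 0 := by
  simp only [centeredSum, mul_sub, sum_sub_distrib, ← sum_mul, h.sum_eq_one, one_mul, sub_self]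

lemma birth_mul_steinSolution_succ (h : MonotoneBirthDeath t birth death π) (r : ℕ → ℝ) {x : ℕ}
    (hx : x ≤ t) :
    birth x * π x * steinSolution t death π r (x + 1) = centeredSum t π r (x + 1) := by
  rcases hx.lt_or_eq with hlt | rfl
  · rw [h.balance x hlt, h.death_mul_steinSolution r hlt]
  · rw [h.birth_last, h.centeredSum_last, zero_mul, zero_mul]

lemma stein_equation (h : MonotoneBirthDeath t birth death π) (r : ℕ → ℝ) {x : ℕ} (hx : x ≤ t) :
    birth x * steinSolution t death π r (x + 1) - death x * steinSolution t death π r x =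
      r x - ∑ j ∈ range (t + 1), π j * r j := by
  have hsucc : centeredSum t π r (x + 1) =
      centeredSum t π r x + π x * (r x - ∑ j ∈ range (t + 1), π j * r j) := sum_range_succ _ x
  apply mul_left_cancel₀ (h.pos x hx).ne'
  linear_combination h.birth_mul_steinSolution_succ r hx - h.death_mul_steinSolution r hx + hsucc

lemma sum_range_birth_sub_death (h : MonotoneBirthDeath t birth death π) {x : ℕ} (hx : x ≤ t) :
    ∑ i ∈ range x, π i * (birth i - death i) = death x * π x := by
  simpa using h.sum_range_stein (fun _ => 1) hx

lemma birth_mul_headMass_le (h : MonotoneBirthDeath t birth death π) {x : ℕ} (hx : x ≤ t) :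
    birth x * headMass π x ≤ death x * headMass π (x + 1) := by
  have hle : (birth x - death x) * headMass π x ≤ death x * π x := by
    rw [← h.sum_range_birth_sub_death hx, headMass, mul_sum]
    refine sum_le_sum fun i hi => ?_
    have hix : i ≤ x := (mem_range.1 hi).le
    rw [mul_comm]
    exact mul_le_mul_of_nonneg_left (sub_le_sub (h.birth_antitone hix) (h.death_monotone hix))
      (h.pos i (hix.trans hx)).le
  rw [headMass_succ]
  linarith

lemma death_mul_tailMass_le (h : MonotoneBirthDeath t birth death π) {x : ℕ} (hxt : x < t) :
    death x * (1 - headMass π (x + 1)) ≤ birth x * (1 - headMass π x) := by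
  have htotal : ∑ i ∈ range (t + 1), π i * (birth i - death i) = 0 := by
    simpa using h.sum_stein fun _ => 1
  have hhead := h.sum_range_birth_sub_death hxt
  have hsplit := sum_range_add_sum_Ico (fun i => π i * (birth i - death i))
    (Nat.succ_le_succ hxt.le)
  have hmass : headMass π (x + 1) + ∑ i ∈ Ico (x + 1) (t + 1), π i = 1 := by
    rw [headMass, sum_range_add_sum_Ico _ (by omega), h.sum_eq_one]
  have hle : ∑ i ∈ Ico (x + 1) (t + 1), π i * (birth i - death i) ≤
      (∑ i ∈ Ico (x + 1) (t + 1), π i) * (birth x - death x) := by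
    rw [sum_mul]
    refine sum_le_sum fun i hi => ?_
    obtain ⟨hxi, hit⟩ := mem_Ico.1 hi
    have hxi' : x ≤ i := by omega
    exact mul_le_mul_of_nonneg_left (sub_le_sub (h.birth_antitone hxi') (h.death_monotone hxi'))
      (h.pos i (by omega)).le
  have hsucc := headMass_succ π x
  have hbal := h.balance x hxt
  rw [eq_sub_of_add_eq' hmass] at hle
  rw [hsucc] at hle ⊢
  linarith

lemma mul_steinSolution_sub_eq_sum (h : MonotoneBirthDeath t birth death π) (r : ℕ → ℝ) {x : ℕ}
    (hx : 0 < x) (hxt : x < t) :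
    π x * (steinSolution t death π r (x + 1) - steinSolution t death π r x) =
      ∑ i ∈ range (t + 1), incrementCoeff birth death π x i * r i := by
  have hbirth := (h.birth_pos x hxt).ne'
  have hdeath := (h.death_pos hx hxt.le).ne'
  calc π x * (steinSolution t death π r (x + 1) - steinSolution t death π r x)
      = centeredSum t π r (x + 1) / birth x - centeredSum t π r x / death x := by
        rw [← h.birth_mul_steinSolution_succ r hxt.le, ← h.death_mul_steinSolution r hxt.le]
        field_simp
    _ = _ := by
        rw [centeredSum_eq_sum (by omega), centeredSum_eq_sum (by omega), sum_div, sum_div,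
          ← sum_sub_distrib]
        exact sum_congr rfl fun i _ => by rw [incrementCoeff]; ring

lemma sum_incrementCoeff (h : MonotoneBirthDeath t birth death π) {x : ℕ} (hx : 0 < x)
    (hxt : x < t) : ∑ i ∈ range (t + 1), incrementCoeff birth death π x i = 0 := by
  simpa [steinSolution, centeredSum, h.sum_eq_one] using
    (h.mul_steinSolution_sub_eq_sum (fun _ => 1) hx hxt).symm

lemma incrementCoeff_nonpos (h : MonotoneBirthDeath t birth death π) {x i : ℕ} (hx : 0 < x)
    (hxt : x < t) (hi : i ≤ t) (hix : i ≠ x) : incrementCoeff birth death π x i ≤ 0 := by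
  have hbirth := h.birth_pos x hxt
  have hdeath := h.death_pos hx hxt.le
  refine mul_nonpos_of_nonneg_of_nonpos (h.pos i hi).le (sub_nonpos.2 ?_)
  rw [div_le_div_iff₀ hbirth hdeath]
  rcases hix.lt_or_gt with hlt | hgt
  · rw [if_pos (by omega), if_pos hlt]
    linarith [h.death_mul_tailMass_le hxt]
  · rw [if_neg (by omega), if_neg (by omega)]
    linarith [h.birth_mul_headMass_le hxt.le]

lemma abs_steinSolution_sub_le (h : MonotoneBirthDeath t birth death π) {r : ℕ → ℝ}
    (hr : ∀ j ≤ t, r j ∈ Set.Icc (0 : ℝ) 1) {x : ℕ} (hx : 0 < x) (hxt : x < t) :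
    |steinSolution t death π r (x + 1) - steinSolution t death π r x| ≤
      (1 - headMass π (x + 1)) / birth x + headMass π x / death x := by
  have hπ := h.pos x hxt.le
  have hle := abs_sum_mul_le_of_sum_eq_zero (mem_range.2 (by omega : x < t + 1))
    (h.sum_incrementCoeff hx hxt)
    (fun i hi hix => h.incrementCoeff_nonpos hx hxt (mem_range_succ_iff.1 hi) hix)
    (fun i hi => hr i (mem_range_succ_iff.1 hi))
  rw [← h.mul_steinSolution_sub_eq_sum r hx hxt, abs_mul, abs_of_pos hπ, incrementCoeff,
    if_pos (Nat.lt_succ_self x), if_neg (lt_irrefl x)] at hle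
  refine (le_of_mul_le_mul_left hle hπ).trans_eq ?_
  ring

lemma birth_mul_abs_steinSolution_sub_le_one (h : MonotoneBirthDeath t birth death π) {r : ℕ → ℝ}
    (hr : ∀ j ≤ t, r j ∈ Set.Icc (0 : ℝ) 1) {x : ℕ} (hx : 0 < x) (hxt : x < t) :
    birth x * |steinSolution t death π r (x + 1) - steinSolution t death π r x| ≤ 1 := by
  have hbirth := h.birth_pos x hxt
  have hdeath := h.death_pos hx hxt.le
  have hhead : birth x * headMass π x / death x ≤ headMass π (x + 1) := by
    rw [div_le_iff₀' hdeath]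
    exact h.birth_mul_headMass_le hxt.le
  calc _ ≤ birth x * ((1 - headMass π (x + 1)) / birth x + headMass π x / death x) :=
        mul_le_mul_of_nonneg_left (h.abs_steinSolution_sub_le hr hx hxt) hbirth.le
    _ = 1 - headMass π (x + 1) + birth x * headMass π x / death x := by field_simp
    _ ≤ 1 := by linarith

lemma death_mul_abs_steinSolution_sub_le_one (h : MonotoneBirthDeath t birth death π) {r : ℕ → ℝ}
    (hr : ∀ j ≤ t, r j ∈ Set.Icc (0 : ℝ) 1) {x : ℕ} (hx : 0 < x) (hxt : x < t) :
    death x * |steinSolution t death π r (x + 1) - steinSolution t death π r x| ≤ 1 := by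
  have hbirth := h.birth_pos x hxt
  have hdeath := h.death_pos hx hxt.le
  have htail : death x * (1 - headMass π (x + 1)) / birth x ≤ 1 - headMass π x := by
    rw [div_le_iff₀' hbirth]
    exact h.death_mul_tailMass_le hxt
  calc _ ≤ death x * ((1 - headMass π (x + 1)) / birth x + headMass π x / death x) :=
        mul_le_mul_of_nonneg_left (h.abs_steinSolution_sub_le hr hx hxt) hdeath.le
    _ = death x * (1 - headMass π (x + 1)) / birth x + headMass π x := by field_simp
    _ ≤ 1 := by linarith

/-- Stein's method for comparing two chains: subtracting the Stein identity of `w` from the expected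
Stein equation of `π` leaves only the common defect `c` of the two pairs of rates. -/
lemma mul_sum_sub_sum_eq (h : MonotoneBirthDeath t birth death π) {birth' death' c w : ℕ → ℝ}
    {N : ℝ} (hw : BirthDeathReversible t birth' death' w) (hsum : ∑ j ∈ range (t + 1), w j = 1)
    (hbirth : ∀ j, birth' j = N * birth j - c j) (hdeath : ∀ j, death' j = N * death j - c j)
    (r : ℕ → ℝ) :
    N * (∑ j ∈ range (t + 1), w j * r j - ∑ j ∈ range (t + 1), π j * r j) =
      ∑ j ∈ range (t + 1), w j * c j *
        (steinSolution t death π r (j + 1) - steinSolution t death π r j) := by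
  set μ := ∑ j ∈ range (t + 1), π j * r j with hμ
  have hcenter : ∑ j ∈ range (t + 1), w j * (r j - μ) = ∑ j ∈ range (t + 1), w j * r j - μ := by
    simp only [mul_sub, sum_sub_distrib, ← sum_mul, hsum, one_mul]
  rw [← hcenter, mul_sum, ← sub_zero (∑ j ∈ range (t + 1), N * _),
    ← hw.sum_stein (steinSolution t death π r), ← sum_sub_distrib]
  refine sum_congr rfl fun j hj => ?_
  rw [hbirth, hdeath, hμ, ← h.stein_equation r (mem_range_succ_iff.1 hj)]
  ring

lemma mul_abs_sum_sub_sum_le (h : MonotoneBirthDeath t birth death π) {birth' death' c w : ℕ → ℝ}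
    {N K : ℝ} (hN : 0 ≤ N) (hK : 0 ≤ K) (hw : BirthDeathReversible t birth' death' w)
    (hw_nonneg : ∀ j ≤ t, 0 ≤ w j) (hsum : ∑ j ∈ range (t + 1), w j = 1)
    (hc : ∀ j ≤ t, 0 ≤ c j)
    (hbirth : ∀ j, birth' j = N * birth j - c j) (hdeath : ∀ j, death' j = N * death j - c j)
    {r : ℕ → ℝ} (hincr : ∀ x, 0 < x → x < t →
      K * |steinSolution t death π r (x + 1) - steinSolution t death π r x| ≤ 1) :
    K * (N * |∑ j ∈ range (t + 1), w j * r j - ∑ j ∈ range (t + 1), π j * r j|) ≤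
      ∑ j ∈ range (t + 1), w j * c j := by
  have hc_zero : c 0 = 0 := by
    have := hdeath 0
    rw [h.death_zero, hw.death_zero] at this
    linarith
  have hc_last : c t = 0 := by
    have := hbirth t
    rw [h.birth_last, hw.birth_last] at this
    linarith
  have habs : N * |∑ j ∈ range (t + 1), w j * r j - ∑ j ∈ range (t + 1), π j * r j| =
      |N * (∑ j ∈ range (t + 1), w j * r j - ∑ j ∈ range (t + 1), π j * r j)| := by
    rw [abs_mul, abs_of_nonneg hN]
  rw [habs, h.mul_sum_sub_sum_eq hw hsum hbirth hdeath]
  refine (mul_le_mul_of_nonneg_left (abs_sum_le_sum_abs _ _) hK).trans ?_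
  rw [mul_sum]
  refine sum_le_sum fun j hj => ?_
  have hjt := mem_range_succ_iff.1 hj
  rcases Nat.eq_zero_or_pos j with rfl | hj0
  · simp [hc_zero]
  rcases hjt.lt_or_eq with hlt | rfl
  · have hwc := mul_nonneg (hw_nonneg j hjt) (hc j hjt)
    rw [abs_mul, abs_of_nonneg hwc, mul_left_comm]
    exact mul_le_of_le_one_right hwc (hincr j hj0 hlt)
  · simp [hc_last]

end MonotoneBirthDeath

end Stein

section Sampling

/-- The probability that a binomial variable with parameters `t` and `p` equals `j`. -/
def binomialProb (t : ℕ) (p : ℝ) (j : ℕ) : ℝ := t.choose j * (p ^ j * (1 - p) ^ (t - j))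

/-- The probability that `t` draws without replacement from `n` items, `k` of which are marked,
contain `j` marked items. The condition `j ≤ k` guards against truncated subtraction. -/
noncomputable def hypergeometricProb (n k t j : ℕ) : ℝ :=
  if j ≤ k then t.choose j * (n - t).choose (k - j) / n.choose k else 0

lemma cast_choose_succ_mul (R : Type*) [Ring R] (n j : ℕ) :
    (n.choose (j + 1) : R) * (j + 1) = n.choose j * (n - j) := by
  rcases le_or_gt j n with hj | hj
  · rw [← Nat.cast_sub hj]
    exact_mod_cast congrArg (Nat.cast : ℕ → R) (Nat.choose_succ_right_eq n j)
  · rw [Nat.choose_eq_zero_of_lt hj, Nat.choose_eq_zero_of_lt (by omega : n < j + 1)]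
    simp

lemma binomialProb_pos {t j : ℕ} {p : ℝ} (hp0 : 0 < p) (hp1 : p < 1) (hj : j ≤ t) :
    0 < binomialProb t p j :=
  mul_pos (Nat.cast_pos.2 (Nat.choose_pos hj))
    (mul_pos (pow_pos hp0 j) (pow_pos (sub_pos.2 hp1) (t - j)))

lemma sum_binomialProb (t : ℕ) (p : ℝ) : ∑ j ∈ range (t + 1), binomialProb t p j = 1 := by
  have hpow := add_pow p (1 - p) t
  rw [add_sub_cancel, one_pow] at hpow
  rw [hpow]
  exact sum_congr rfl fun j _ => mul_comm _ _

lemma binomialProb_reversible (t : ℕ) (p : ℝ) :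
    BirthDeathReversible t (fun j => p * (t - j)) (fun j => (1 - p) * j) (binomialProb t p) where
  death_zero := by simp
  birth_last := by simp
  balance j hj := by
    have hsub : t - j = t - (j + 1) + 1 := by omega
    simp only [binomialProb, hsub, pow_succ, Nat.cast_succ]
    linear_combination -(p ^ (j + 1) * (1 - p) ^ (t - (j + 1) + 1)) * cast_choose_succ_mul ℝ t j

lemma binomialProb_monotoneBirthDeath (t : ℕ) {p : ℝ} (hp0 : 0 < p) (hp1 : p < 1) :
    MonotoneBirthDeath t (fun j => p * (t - j)) (fun j => (1 - p) * j) (binomialProb t p) where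
  toBirthDeathReversible := binomialProb_reversible t p
  pos _ hj := binomialProb_pos hp0 hp1 hj
  sum_eq_one := sum_binomialProb t p
  birth_pos _ hj := mul_pos hp0 (sub_pos.2 (Nat.cast_lt.2 hj))
  birth_antitone _ _ hij :=
    mul_le_mul_of_nonneg_left (sub_le_sub_left (Nat.cast_le.2 hij) _) hp0.le
  death_monotone _ _ hij := mul_le_mul_of_nonneg_left (Nat.cast_le.2 hij) (sub_nonneg.2 hp1.le)

/-- The factor `t * p * (1 - p)` is the mean of the birth rate `p * (t - x)` and the death rate
`(1 - p) * x` with weights `1 - p` and `p`. -/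
lemma mul_abs_binomial_steinSolution_sub_le_one {t : ℕ} {p : ℝ} (hp0 : 0 < p) (hp1 : p < 1)
    {r : ℕ → ℝ} (hr : ∀ j ≤ t, r j ∈ Set.Icc (0 : ℝ) 1) {x : ℕ} (hx : 0 < x) (hxt : x < t) :
    t * p * (1 - p) * |steinSolution t (fun j => (1 - p) * j) (binomialProb t p) r (x + 1) -
      steinSolution t (fun j => (1 - p) * j) (binomialProb t p) r x| ≤ 1 := by
  have h := binomialProb_monotoneBirthDeath t hp0 hp1
  have hbirth := mul_le_mul_of_nonneg_left
    (h.birth_mul_abs_steinSolution_sub_le_one hr hx hxt) (sub_nonneg.2 hp1.le)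
  have hdeath := mul_le_mul_of_nonneg_left
    (h.death_mul_abs_steinSolution_sub_le_one hr hx hxt) hp0.le
  linarith

lemma hypergeometricProb_nonneg (n k t j : ℕ) : 0 ≤ hypergeometricProb n k t j := by
  rw [hypergeometricProb]
  positivity

lemma hypergeometricProb_reversible {n t : ℕ} (k : ℕ) (ht : t ≤ n) :
    BirthDeathReversible t (fun j => ((k : ℝ) - j) * (t - j)) (fun j => j * ((n : ℝ) - k - t + j))
      (hypergeometricProb n k t) where
  death_zero := by simp
  birth_last := by simp
  balance j _ := by
    rcases lt_trichotomy j k with hlt | rfl | hgt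
    · obtain ⟨d, rfl⟩ := Nat.exists_eq_add_of_lt hlt
      have hsub : j + d + 1 - j = d + 1 := by omega
      have hsub' : j + d + 1 - (j + 1) = d := by omega
      have hdraw := cast_choose_succ_mul ℝ t j
      have hrest := cast_choose_succ_mul ℝ (n - t) d
      rw [Nat.cast_sub ht] at hrest
      simp only [hypergeometricProb, if_pos hlt.le, if_pos (Nat.succ_le_of_lt hlt), hsub, hsub']
      push_cast
      rw [← mul_div_assoc, ← mul_div_assoc]
      congr 1
      linear_combination (t.choose j * (t - j) : ℝ) * hrest -
        ((n - t).choose d * (n - t - d) : ℝ) * hdraw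
    · simp [hypergeometricProb]
    · simp [hypergeometricProb, hgt.not_ge, (hgt.trans (Nat.lt_succ_self j)).not_ge]

lemma sum_hypergeometricProb {n k t : ℕ} (hk : k ≤ n) (ht : t ≤ n) :
    ∑ j ∈ range (t + 1), hypergeometricProb n k t j = 1 := by
  have hchoose : (n.choose k : ℝ) ≠ 0 := Nat.cast_ne_zero.2 (Nat.choose_pos hk).ne'
  have hvandermonde :
      (n.choose k : ℝ) = ∑ j ∈ range (k + 1), (t.choose j * (n - t).choose (k - j) : ℝ) := by
    have h := Nat.add_choose_eq t (n - t) k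
    rw [Nat.add_sub_cancel' ht, Nat.sum_antidiagonal_eq_sum_range_succ_mk] at h
    exact_mod_cast h
  simp only [hypergeometricProb, ← sum_filter, ← sum_div]
  rw [div_eq_one_iff_eq hchoose, hvandermonde]
  refine sum_subset (fun j hj => mem_range_succ_iff.2 (mem_filter.1 hj).2) fun j hj hjt => ?_
  have htj : t < j := by
    simp only [mem_filter, mem_range] at hj hjt
    omega
  rw [Nat.choose_eq_zero_of_lt htj, Nat.cast_zero, zero_mul]

/-- The linear test function `n * j + (k * t - k - n * t)` is chosen so that its Stein identity is
a multiple of `j * (t - j)` up to a constant. -/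
lemma sum_hypergeometricProb_mul_sub {n k t : ℕ} (hk : k ≤ n) (ht : t ≤ n) :
    (n : ℝ) * (n - 1) * ∑ j ∈ range (t + 1), hypergeometricProb n k t j * (j * (t - j)) =
      k * (n - k) * (t * (t - 1)) := by
  have hstein := (hypergeometricProb_reversible k ht).sum_stein
    fun j => n * j + (k * t - k - n * t)
  suffices h : (n : ℝ) * (n - 1) * ∑ j ∈ range (t + 1), hypergeometricProb n k t j * (j * (t - j)) -
      k * (n - k) * (t * (t - 1)) * ∑ j ∈ range (t + 1), hypergeometricProb n k t j = 0 by
    rw [sum_hypergeometricProb hk ht] at h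
    linarith
  rw [← hstein, mul_sum, mul_sum, ← sum_sub_distrib]
  refine sum_congr rfl fun j _ => ?_
  push_cast
  ring

lemma abs_sum_hypergeometricProb_sub_le {n k t : ℕ} (hk : 0 < k) (hkn : k < n) (ht : 0 < t)
    (htn : t ≤ n) {r : ℕ → ℝ} (hr : ∀ j ≤ t, r j ∈ Set.Icc (0 : ℝ) 1) :
    |∑ j ∈ range (t + 1), hypergeometricProb n k t j * r j -
      ∑ j ∈ range (t + 1), binomialProb t (k / n) j * r j| ≤ ((t : ℝ) - 1) / (n - 1) := by
  have hk0 : (0 : ℝ) < k := Nat.cast_pos.2 hk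
  have hkn' : (k : ℝ) < n := Nat.cast_lt.2 hkn
  have hn0 : (0 : ℝ) < n := hk0.trans hkn'
  have hn1 : (0 : ℝ) < n - 1 := sub_pos.2 (Nat.one_lt_cast.2 (by omega))
  have ht0 : (0 : ℝ) < t := Nat.cast_pos.2 ht
  have hp0 : (0 : ℝ) < k / n := div_pos hk0 hn0
  have hp1 : (k : ℝ) / n < 1 := (div_lt_one hn0).2 hkn'
  have hK : 0 < (t : ℝ) * (k / n) * (1 - k / n) :=
    mul_pos (mul_pos ht0 hp0) (sub_pos.2 hp1)
  have hcompare := (binomialProb_monotoneBirthDeath t hp0 hp1).mul_abs_sum_sub_sum_le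
    (c := fun j => (j : ℝ) * (t - j)) hn0.le hK.le (hypergeometricProb_reversible k htn)
    (fun j _ => hypergeometricProb_nonneg n k t j) (sum_hypergeometricProb hkn.le htn)
    (fun j hj => mul_nonneg j.cast_nonneg (sub_nonneg.2 (Nat.cast_le.2 hj)))
    (fun j => by field_simp) (fun j => by field_simp; ring)
    (fun x hx hxt => mul_abs_binomial_steinSolution_sub_le_one hp0 hp1 hr hx hxt)
  have hvariance : ∑ j ∈ range (t + 1), hypergeometricProb n k t j * (j * (t - j)) =
      t * (k / n) * (1 - k / n) * (n * ((t - 1) / (n - 1))) := by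
    apply mul_left_cancel₀ (mul_pos hn0 hn1).ne'
    rw [sum_hypergeometricProb_mul_sub hkn.le htn]
    field_simp
  rw [hvariance] at hcompare
  exact le_of_mul_le_mul_left (le_of_mul_le_mul_left hcompare hK) hn0

end Sampling

section Cube

open scoped BigOperators

variable {ι : Type*} [Fintype ι]

/-- The number of `true` coordinates of a vector. -/
def trueCount (x : ι → Bool) : ℕ := #{i | x i = true}

lemma trueCount_le_card (x : ι → Bool) : trueCount x ≤ Fintype.card ι := card_le_univ _

lemma card_trueCount_eq [DecidableEq ι] (k : ℕ) :
    #{x : ι → Bool | trueCount x = k} = (Fintype.card ι).choose k := by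
  rw [← card_univ, ← card_powersetCard]
  refine card_bij' (fun x _ => ({i | x i = true} : Finset ι)) (fun s _ i => decide (i ∈ s))
    ?_ ?_ ?_ ?_
  · intro x hx
    exact mem_powersetCard_univ.2 (mem_filter.1 hx).2
  · intro s hs
    exact mem_filter.2 ⟨mem_univ _, by simpa [trueCount] using hs⟩
  · intro x _
    simp
  · intro s _
    simp

lemma trueCount_eq_add (P : ι → Prop) [DecidablePred P] (x : ι → Bool) :
    trueCount x =
      trueCount (fun i : {i // P i} => x i) + trueCount (fun i : {i // ¬P i} => x i) := by
  simp only [trueCount, card_filter]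
  exact (Fintype.sum_subtype_add_sum_subtype P fun i => if x i = true then 1 else 0).symm

lemma sum_pi_eq_sum_sum_restrict {α M : Type*} [Fintype α] [AddCommMonoid M] [DecidableEq ι]
    (P : ι → Prop) [DecidablePred P] (G : ({i // P i} → α) → ({i // ¬P i} → α) → M) :
    ∑ x : ι → α, G (fun i => x i) (fun i => x i) = ∑ y, ∑ z, G y z := by
  rw [← Fintype.sum_prod_type']
  exact (Equiv.piEquivPiSubtypeProd P fun _ => α).sum_comp fun yz => G yz.1 yz.2

/-- The product Bernoulli probability of a vector, every coordinate being `true` with probability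
`p`. -/
def bernoulliProb (p : ℝ) (x : ι → Bool) : ℝ := ∏ i, if x i then p else 1 - p

lemma bernoulliProb_eq_mul (P : ι → Prop) [DecidablePred P] (p : ℝ) (x : ι → Bool) :
    bernoulliProb p x =
      bernoulliProb p (fun i : {i // P i} => x i) * bernoulliProb p (fun i : {i // ¬P i} => x i) :=
  (Fintype.prod_subtype_mul_prod_subtype P fun i => if x i then p else 1 - p).symm

lemma bernoulliProb_eq_pow (p : ℝ) (x : ι → Bool) :
    bernoulliProb p x = p ^ trueCount x * (1 - p) ^ (Fintype.card ι - trueCount x) := by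
  have hcard := card_filter_add_card_filter_not (s := (univ : Finset ι)) (fun i => x i = true)
  rw [bernoulliProb, prod_ite, prod_const, prod_const, trueCount, ← card_univ, ← hcard,
    Nat.add_sub_cancel_left]

lemma sum_bernoulliProb [DecidableEq ι] (p : ℝ) : ∑ x : ι → Bool, bernoulliProb p x = 1 := by
  have hprod := Fintype.prod_sum fun (_ : ι) (b : Bool) => if b then p else 1 - p
  refine hprod.symm.trans ?_
  simp

lemma sum_mul_eq_sum_layers [DecidableEq ι] (φ : ℕ → ℝ) (f : (ι → Bool) → ℝ) :
    ∑ x, φ (trueCount x) * f x =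
      ∑ j ∈ range (Fintype.card ι + 1),
        (Fintype.card ι).choose j * φ j * 𝔼 x with trueCount x = j, f x := by
  rw [← sum_fiberwise_of_maps_to fun x _ => mem_range_succ_iff.2 (trueCount_le_card x)]
  refine sum_congr rfl fun j _ => ?_
  rw [← card_trueCount_eq, mul_right_comm, card_mul_expect, sum_mul]
  refine sum_congr rfl fun x hx => ?_
  rw [(mem_filter.1 hx).2, mul_comm]

lemma card_add_trueCount_eq [DecidableEq ι] (j k : ℕ) :
    #{x : ι → Bool | j + trueCount x = k} =
      if j ≤ k then (Fintype.card ι).choose (k - j) else 0 := by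
  split_ifs with hjk
  · rw [← card_trueCount_eq]
    congr 1
    ext x
    simp only [mem_filter, mem_univ, true_and]
    omega
  · rw [card_eq_zero, filter_eq_empty_iff]
    intro x _
    omega

variable [DecidableEq ι] (P : ι → Prop) [DecidablePred P]

lemma expect_layer_eq_sum_hypergeometricProb (k : ℕ) (g : ({i // P i} → Bool) → ℝ) :
    𝔼 x : ι → Bool with trueCount x = k, g (fun i => x i) =
      ∑ j ∈ range (Fintype.card {i // P i} + 1),
        hypergeometricProb (Fintype.card ι) k (Fintype.card {i // P i}) j *
          𝔼 y with trueCount y = j, g y := by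
  have hsum : ∑ x : ι → Bool with trueCount x = k, g (fun i => x i) =
      ∑ y, (#{z : {i // ¬P i} → Bool | trueCount y + trueCount z = k} : ℝ) * g y := by
    simp only [sum_filter, trueCount_eq_add P]
    rw [sum_pi_eq_sum_sum_restrict P fun y z => if trueCount y + trueCount z = k then g y else 0]
    simp only [← sum_filter, sum_const, nsmul_eq_mul]
  rw [expect_eq_sum_div_card, card_trueCount_eq, hsum]
  simp only [card_add_trueCount_eq, Fintype.card_subtype_compl]
  rw [sum_mul_eq_sum_layers (fun j => ((if j ≤ k then
    (Fintype.card ι - Fintype.card {i // P i}).choose (k - j) else 0 : ℕ) : ℝ)) g, sum_div]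
  refine sum_congr rfl fun j _ => ?_
  rw [hypergeometricProb]
  split_ifs
  · ring
  · simp

lemma sum_bernoulliProb_mul_eq_sum_binomialProb (p : ℝ) (g : ({i // P i} → Bool) → ℝ) :
    ∑ x : ι → Bool, bernoulliProb p x * g (fun i => x i) =
      ∑ j ∈ range (Fintype.card {i // P i} + 1),
        binomialProb (Fintype.card {i // P i}) p j * 𝔼 y with trueCount y = j, g y := by
  simp only [bernoulliProb_eq_mul P]
  rw [sum_pi_eq_sum_sum_restrict P fun y z => bernoulliProb p y * bernoulliProb p z * g y]
  simp only [← sum_mul, ← mul_sum, sum_bernoulliProb, mul_one]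
  simp only [bernoulliProb_eq_pow]
  rw [sum_mul_eq_sum_layers (fun j => p ^ j * (1 - p) ^ (Fintype.card {i // P i} - j)) g]
  rfl

variable {P}

lemma abs_expect_layer_sub_sum_bernoulliProb_le [Nonempty {i // P i}] {k : ℕ} (hk : 0 < k)
    (hkn : k < Fintype.card ι) {f : (ι → Bool) → ℝ} (hf : DependsOn f {i | P i})
    (hf01 : ∀ x, f x ∈ Set.Icc (0 : ℝ) 1) :
    |𝔼 x with trueCount x = k, f x - ∑ x, bernoulliProb (k / Fintype.card ι) x * f x| ≤
      ((Fintype.card {i // P i} : ℝ) - 1) / (Fintype.card ι - 1) := by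
  let extend (y : {i // P i} → Bool) (i : ι) : Bool := if h : P i then y ⟨i, h⟩ else false
  have hfactor : f = fun x => f (extend fun i => x i) :=
    funext fun x => hf fun i (hi : P i) => by simp [extend, hi]
  have hmean : ∀ j ≤ Fintype.card {i // P i},
      𝔼 y with trueCount y = j, f (extend y) ∈ Set.Icc (0 : ℝ) 1 := by
    intro j hj
    have hne : ({y | trueCount y = j} : Finset ({i // P i} → Bool)).Nonempty := by
      rw [← card_pos, card_trueCount_eq]
      exact Nat.choose_pos hj
    exact ⟨expect_nonneg fun y _ => (hf01 _).1, expect_le hne fun y _ => (hf01 _).2⟩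
  rw [hfactor, expect_layer_eq_sum_hypergeometricProb P k fun y => f (extend y),
    sum_bernoulliProb_mul_eq_sum_binomialProb P _ fun y => f (extend y)]
  exact abs_sum_hypergeometricProb_sub_le hk hkn Fintype.card_pos (Fintype.card_subtype_le P) hmean

end Cube

theorem stmt_5_general {ι : Type*} [Fintype ι] [DecidableEq ι] {k : ℕ} (hk : 0 < k)
    (hkn : k < Fintype.card ι) {S : Type*} {F : (ι → Bool) → S} {T : Finset ι}
    (hF : DependsOn F (T : Set ι)) (A : Set S) :
    |(#{x ∈ ({x | #{i | x i = true} = k} : Finset (ι → Bool)) | F x ∈ A} : ℝ) /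
        #{x : ι → Bool | #{i | x i = true} = k} -
      ∑ x : ι → Bool,
        (∏ i, if x i then (k : ℝ) / Fintype.card ι else 1 - (k : ℝ) / Fintype.card ι) *
          (if F x ∈ A then (1 : ℝ) else 0)|
      ≤ (max (#T : ℝ) 1 - 1) / ((Fintype.card ι : ℝ) - 1) := by
  obtain ⟨T', hTT', -, hcard⟩ := exists_subsuperset_card_eq (subset_univ T)
    (le_max_left #T 1) (max_le (card_le_univ T) (card_univ (α := ι) ▸ hk.trans hkn))
  have hT' : T'.Nonempty := card_pos.1 (hcard ▸ lt_max_of_lt_right one_pos)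
  have : Nonempty {i // i ∈ T'} := hT'.to_subtype
  have hf : DependsOn (fun x => if F x ∈ A then (1 : ℝ) else 0) {i | i ∈ T'} :=
    fun x y hxy => by simp only [hF fun i hi => hxy i (hTT' hi)]
  have h := abs_expect_layer_sub_sum_bernoulliProb_le hk hkn hf fun x => by
    split_ifs <;> simp
  rw [expect_eq_sum_div_card, sum_boole, Fintype.card_subtype, filter_univ_mem, hcard,
    Nat.cast_max, Nat.cast_one] at h
  exact h


theorem stmt_5 (n k s : ℕ) (hk : 1 ≤ k) (hkn : 2 * k ≤ n) (S : Type*)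
    (F : (Fin n → Bool) → S)
    (hF : ∀ x y : Fin n → Bool, (∀ i : Fin n, (i : ℕ) < s → x i = y i) → F x = F y)
    (A : Set S) :
    |((((Finset.univ : Finset (Fin n → Bool)).filter
          (fun x => (Finset.univ.filter (fun i => x i = true)).card = k)).filter
          (fun x => F x ∈ A)).card : ℝ) /
        ((((Finset.univ : Finset (Fin n → Bool)).filter
          (fun x => (Finset.univ.filter (fun i => x i = true)).card = k)).card : ℝ)) -
      ∑ x : Fin n → Bool,
        (∏ i, if x i then (k : ℝ) / n else 1 - (k : ℝ) / n) *
          (if F x ∈ A then (1 : ℝ) else 0)|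
      ≤ (max (s : ℝ) (2 * n / k) - 1) / ((n : ℝ) - 1) := by
  have hdep : DependsOn F (({i | i < s} : Finset (Fin n)) : Set (Fin n)) :=
    fun x y hxy => hF x y fun i hi => hxy i (by simpa using hi)
  have hcard : (#{i : Fin n | i < s} : ℝ) ≤ s := by
    exact_mod_cast Fin.card_filter_val_lt.trans_le (min_le_right n s)
  have hratio : (1 : ℝ) ≤ 2 * n / k := by
    rw [one_le_div (Nat.cast_pos.2 hk)]
    exact_mod_cast (by omega : k ≤ 2 * n)
  have hn : (0 : ℝ) ≤ n - 1 := sub_nonneg.2 (Nat.one_le_cast.2 (by omega))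
  have h := stmt_5_general hk (by rw [Fintype.card_fin]; omega) hdep A
  rw [Fintype.card_fin] at h
  exact h.trans (by gcongr)
end

section
/- Let $f, m$ be positive integers and $V$ a finite set with $2f \le mf \le |V|$. For each $i \in \{1,\dots,m\}$, let $\mathcal{F}_i$ be a collection of at least $\gamma |V|^f$ ordered $f$-subsets of $V$ (sequences of $f$ distinct elements). Let $\vec X_1, \dots, \vec X_m$ be uniformly random pairwise disjoint ordered $f$-subsets of $V$, and let $N$ be the number of indices $i$ with $\vec X_i \in \mathcal{F}_i$. Then $\Pr[N < \gamma m / 2] \le C_f / (\gamma m)$ for some constant $C_f$ depending only on $f$. -/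
open Finset
open scoped Classical

/-!
Sequences of `m` disjoint ordered `f`-subsets of `V` are injections into `V` of a set of `m * f`
positions. The permutations of `V` act transitively on injections, so restricting a uniform one to
a set of positions gives a uniform injection of that set. Hence the events `X_i ∈ ℱ_i` have the
densities of the `ℱ_i`, and two of them are positively correlated by at most the factor
`(n)_f / (n - f)_f ≤ 1 + 4 f² / n`, where `n = |V| ≥ 4 f²`. Chebyshev's inequality then gives a
bound of order `1 / (γ m) + f² / n`.

The claimed bound exceeds `1` unless `γ m ≥ 12 + 36 f²`. In that case, as `γ ≤ 1` and `m ≤ n`, we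
get `f² / n ≤ γ / 4`, so discarding the non-injective members of `ℱ_i` leaves density at least
`3 γ / 4`.
-/

open Function
open scoped BigOperators

section SecondMoment

variable {Ω ι : Type*} [Fintype Ω] [Fintype ι]

lemma dens_filter_le_sub_le_expect_sq_div (X : Ω → ℝ) (a : ℝ) {s : ℝ} (hs : 0 < s) :
    (dens {ω | X ω ≤ a - s} : ℝ) ≤ (𝔼 ω, (X ω - a) ^ 2) / s ^ 2 := by
  rw [← expect_indicator_one, expect_div]
  refine expect_le_expect fun ω _ ↦ Set.indicator_apply_le' (fun hω ↦ ?_) fun _ ↦ by positivity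
  have hdev : s ≤ a - X ω := by
    have : X ω ≤ a - s := by simpa using hω
    linarith
  rw [Pi.one_apply, one_le_div (by positivity), ← neg_sub a, neg_sq]
  gcongr

lemma expect_sub_expect_sq [Nonempty Ω] (X : Ω → ℝ) :
    𝔼 ω, (X ω - 𝔼 η, X η) ^ 2 = 𝔼 ω, X ω ^ 2 - (𝔼 ω, X ω) ^ 2 := by
  simp only [sub_sq, expect_add_distrib, expect_sub_distrib, ← expect_mul, ← mul_expect,
    Fintype.expect_const]
  ring

lemma card_filter_mem_eq_sum_indicator {Ω : Type*} [DecidableEq Ω] (A : ι → Finset Ω) (ω : Ω) :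
    (#{i | ω ∈ A i} : ℝ) = ∑ i, Set.indicator (A i : Set Ω) 1 ω := by
  simp [Set.indicator_apply]

lemma expect_card_filter_mem [DecidableEq Ω] (A : ι → Finset Ω) :
    𝔼 ω, (#{i | ω ∈ A i} : ℝ) = ∑ i, ((A i).dens : ℝ) := by
  simp only [card_filter_mem_eq_sum_indicator, expect_sum_comm, expect_indicator_one]

lemma expect_card_filter_mem_sq [DecidableEq Ω] (A : ι → Finset Ω) :
    𝔼 ω, (#{i | ω ∈ A i} : ℝ) ^ 2 = ∑ i, ∑ j, ((A i ∩ A j).dens : ℝ) := by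
  simp only [card_filter_mem_eq_sum_indicator, sq, sum_mul_sum, expect_sum_comm,
    ← expect_indicator_one, coe_inter, Set.inter_indicator_one, Pi.mul_apply]

lemma sum_sum_dens_inter_le [DecidableEq Ω] (A : ι → Finset Ω) {ρ : ℝ} (hρ : 0 ≤ ρ)
    (hA : Pairwise fun i j ↦ ((A i ∩ A j).dens : ℝ) ≤ ρ * ((A i).dens * (A j).dens)) :
    ∑ i, ∑ j, ((A i ∩ A j).dens : ℝ) ≤
      ∑ i, ((A i).dens : ℝ) + ρ * (∑ i, ((A i).dens : ℝ)) ^ 2 := by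
  have hterm (i j : ι) : ((A i ∩ A j).dens : ℝ) ≤
      (if i = j then ((A i).dens : ℝ) else 0) + ρ * ((A i).dens * (A j).dens) := by
    obtain rfl | hij := eq_or_ne i j
    · simp only [inter_self, if_true, le_add_iff_nonneg_right]
      positivity
    · simpa only [hij, if_false, zero_add] using hA hij
  calc ∑ i, ∑ j, ((A i ∩ A j).dens : ℝ)
      ≤ ∑ i, ∑ j, ((if i = j then ((A i).dens : ℝ) else 0) + ρ * ((A i).dens * (A j).dens)) := by
        gcongr with i _ j _; exact hterm i j
    _ = _ := by
        simp only [sum_add_distrib, sum_ite_eq, mem_univ, if_true, ← mul_sum, sq, sum_mul_sum]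

lemma dens_card_filter_mem_le [Nonempty Ω] [DecidableEq Ω] (A : ι → Finset Ω) {ρ c μ : ℝ}
    (hρ : 0 ≤ ρ)
    (hA : Pairwise fun i j ↦ ((A i ∩ A j).dens : ℝ) ≤ ρ * ((A i).dens * (A j).dens))
    (hμ : ∑ i, ((A i).dens : ℝ) = μ) (hμ_pos : 0 < μ) (hc : 0 < c) :
    (dens {ω | (#{i | ω ∈ A i} : ℝ) ≤ μ - c * μ} : ℝ) ≤ (1 / μ + (ρ - 1)) / c ^ 2 := by
  have hmean : 𝔼 ω, (#{i | ω ∈ A i} : ℝ) = μ := (expect_card_filter_mem A).trans hμ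
  have hvar : 𝔼 ω, ((#{i | ω ∈ A i} : ℝ) - μ) ^ 2 ≤ μ + (ρ - 1) * μ ^ 2 := by
    have hsq := sum_sum_dens_inter_le A hρ hA
    have := expect_sub_expect_sq fun ω ↦ (#{i | ω ∈ A i} : ℝ)
    rw [hmean, expect_card_filter_mem_sq] at this
    rw [hμ] at hsq
    linarith
  calc (dens {ω | (#{i | ω ∈ A i} : ℝ) ≤ μ - c * μ} : ℝ)
      ≤ (𝔼 ω, ((#{i | ω ∈ A i} : ℝ) - μ) ^ 2) / (c * μ) ^ 2 :=
        dens_filter_le_sub_le_expect_sq_div _ _ (by positivity)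
    _ ≤ (μ + (ρ - 1) * μ ^ 2) / (c * μ) ^ 2 := by gcongr
    _ = (1 / μ + (ρ - 1)) / c ^ 2 := by field_simp

end SecondMoment

section Restriction

lemma dens_filter_mem_of_equivariant {G X Y : Type*} [Group G] [MulAction G X] [MulAction G Y]
    [MulAction.IsPretransitive G Y] [Fintype X] [Nonempty X] [Fintype Y] [DecidableEq Y]
    (π : X →[G] Y) (F : Finset Y) : dens {x | π x ∈ F} = F.dens := by
  obtain ⟨x₀⟩ := ‹Nonempty X›
  have hfiber (y : Y) : #{x | π x = y} = #{x | π x = π x₀} := by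
    obtain ⟨g, rfl⟩ := MulAction.exists_smul_eq G (π x₀) y
    refine (card_equiv (MulAction.toPerm g) fun x ↦ ?_).symm
    simp [map_smul]
  have hcard (E : Finset Y) : #{x | π x ∈ E} = #E * #{x | π x = π x₀} := by
    simp only [← sum_card_fiberwise_eq_card_filter, hfiber, sum_const, smul_eq_mul]
  have hX : Fintype.card X = Fintype.card Y * #{x | π x = π x₀} := by
    simpa using hcard univ
  have hpos : 0 < #{x | π x = π x₀} := card_pos.2 ⟨x₀, by simp⟩
  rw [dens, dens, hcard, hX, Nat.cast_mul, Nat.cast_mul, mul_div_mul_right _ _ (by positivity)]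

variable {α κ κ' V : Type*} [Fintype α] [Fintype κ] [Fintype κ'] [Fintype V]

lemma dens_filter_trans_mem [Nonempty (α ↪ V)] (e : κ ↪ α) (F : Finset (κ ↪ V)) :
    dens {g : α ↪ V | e.trans g ∈ F} = F.dens := by
  have : MulAction.IsPretransitive (Equiv.Perm V) (κ ↪ V) :=
    ⟨Equiv.Perm.exists_smul_eq_embedding⟩
  let restrict : (α ↪ V) →[Equiv.Perm V] (κ ↪ V) := ⟨e.trans, fun _ _ ↦ rfl⟩
  exact dens_filter_mem_of_equivariant restrict F

lemma dens_filter_trans_mem_and_trans_mem_le [Nonempty (α ↪ V)] {a : κ ↪ α} {b : κ' ↪ α}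
    (hab : ∀ i j, a i ≠ b j) (A : Finset (κ ↪ V)) (B : Finset (κ' ↪ V)) :
    (dens {g : α ↪ V | a.trans g ∈ A ∧ b.trans g ∈ B} : ℝ) ≤
      (Fintype.card V).descFactorial (Fintype.card κ') /
        (Fintype.card V - Fintype.card κ).descFactorial (Fintype.card κ') *
      (A.dens * B.dens) := by
  let ab : κ ⊕ κ' ↪ α := ⟨Sum.elim a b, a.injective.sumElim b.injective hab⟩
  let F : Finset (κ ⊕ κ' ↪ V) := {h | Embedding.inl.trans h ∈ A ∧ Embedding.inr.trans h ∈ B}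
  have hdens : dens {g : α ↪ V | a.trans g ∈ A ∧ b.trans g ∈ B} = F.dens := by
    rw [← dens_filter_trans_mem ab F]
    congr 1
    ext g
    simp only [F, mem_filter_univ]
    rfl
  have hcard : #F ≤ #A * #B := by
    rw [← card_product]
    refine card_le_card_of_injOn (fun h ↦ (Embedding.inl.trans h, Embedding.inr.trans h))
      (fun h hh ↦ by simpa [F] using hh) fun h _ h' _ heq ↦ ?_
    obtain ⟨hl, hr⟩ := Prod.mk.inj heq
    ext (i | j)
    exacts [DFunLike.congr_fun hl i, DFunLike.congr_fun hr j]
  obtain ⟨g⟩ := ‹Nonempty (α ↪ V)›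
  have hB : ((Fintype.card V).descFactorial (Fintype.card κ') : ℝ) ≠ 0 := by
    rw [← Fintype.card_embedding_eq]
    have : Nonempty (κ' ↪ V) := ⟨b.trans g⟩
    exact Nat.cast_ne_zero.2 Fintype.card_ne_zero
  have hsplit := Nat.descFactorial_mul_descFactorial (n := Fintype.card V)
    (Nat.le_add_right (Fintype.card κ) (Fintype.card κ'))
  rw [Nat.add_sub_cancel_left] at hsplit
  rw [hdens, nnratCast_dens, nnratCast_dens, nnratCast_dens, Fintype.card_embedding_eq,
    Fintype.card_embedding_eq, Fintype.card_embedding_eq, Fintype.card_sum, ← hsplit, Nat.cast_mul]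
  calc (#F : ℝ) / _ ≤ (#A * #B : ℕ) / _ := by gcongr
    _ = _ := by push_cast; field_simp

end Restriction

section DescFactorial

lemma pow_mul_one_sub_le_descFactorial_sub {n k l : ℕ} (h : k + l ≤ n) :
    (n : ℝ) ^ l * (1 - l * (k + l) / n) ≤ (n - k).descFactorial l := by
  obtain rfl | hn := n.eq_zero_or_pos
  · obtain ⟨rfl, rfl⟩ : k = 0 ∧ l = 0 := by omega
    simp
  have hratio : ((k : ℝ) + l) / n ≤ 1 := div_le_one_of_le₀ (mod_cast h) n.cast_nonneg
  calc (n : ℝ) ^ l * (1 - l * (k + l) / n) = n ^ l * (1 + l * -((k + l) / n)) := by ring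
    _ ≤ n ^ l * (1 + -((k + l) / n)) ^ l := by
        gcongr
        exact one_add_mul_le_pow (by linarith) l
    _ = ((n - k - l : ℕ) : ℝ) ^ l := by
        rw [← mul_pow, Nat.sub_sub, Nat.cast_sub h]
        congr 1
        push_cast
        field_simp
        ring
    _ ≤ (n - k).descFactorial l := by
        exact_mod_cast (Nat.pow_le_pow_left (by omega) l).trans (Nat.pow_sub_le_descFactorial _ l)

lemma descFactorial_div_descFactorial_sub_le {n k : ℕ} (h : 4 * k ^ 2 ≤ n) :
    (n.descFactorial k : ℝ) / (n - k).descFactorial k ≤ 1 + 4 * (k : ℝ) ^ 2 / n := by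
  have hkk : k + k ≤ n := by nlinarith
  have hpos : 0 < (n - k).descFactorial k := Nat.descFactorial_pos.2 (by omega)
  have hx : (k : ℝ) ^ 2 / n ≤ 1 / 4 := by
    obtain rfl | hn := n.eq_zero_or_pos
    · norm_num
    · rw [div_le_iff₀ (by positivity)]
      have : (4 * k ^ 2 : ℝ) ≤ n := mod_cast h
      linarith
  have hx₀ : 0 ≤ (k : ℝ) ^ 2 / n := by positivity
  rw [div_le_iff₀ (by positivity)]
  calc (n.descFactorial k : ℝ) ≤ n ^ k * 1 := by
        rw [mul_one]
        exact_mod_cast n.descFactorial_le_pow k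
    _ ≤ n ^ k * ((1 + 4 * (k ^ 2 / n)) * (1 - 2 * (k ^ 2 / n))) := by
        gcongr
        nlinarith
    _ = (1 + 4 * k ^ 2 / n) * (n ^ k * (1 - k * (k + k) / n)) := by ring
    _ ≤ (1 + 4 * k ^ 2 / n) * (n - k).descFactorial k := by
        gcongr
        exact pow_mul_one_sub_le_descFactorial_sub hkk

end DescFactorial

section RandomInjection

variable {ι κ α V : Type*} [Fintype ι] [Fintype κ] [Fintype α] [Fintype V]

lemma card_filter_embedding (p : (α → V) → Prop) [DecidablePred p] :
    #{g : α ↪ V | p g} = #{g : α → V | Injective g ∧ p g} := by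
  rw [← card_map ⟨_, DFunLike.coe_injective⟩]
  congr 1
  ext g
  simp only [mem_map, mem_filter_univ]
  exact ⟨fun ⟨h, hp, hg⟩ ↦ hg ▸ ⟨h.injective, hp⟩, fun ⟨hinj, hp⟩ ↦ ⟨⟨g, hinj⟩, hp, rfl⟩⟩

lemma card_filter_injective :
    #{g : α → V | Injective g} = (Fintype.card V).descFactorial (Fintype.card α) := by
  rw [← Fintype.card_embedding_eq, ← card_univ]
  simpa using (card_filter_embedding (α := α) (V := V) fun _ ↦ True).symm

lemma dens_filter_not_injective_le (h : Fintype.card κ ≤ Fintype.card V) :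
    (dens {g : κ → V | ¬ Injective g} : ℝ) ≤ (Fintype.card κ : ℝ) ^ 2 / Fintype.card V := by
  obtain ⟨g⟩ : Nonempty (κ ↪ V) := Embedding.nonempty_of_card_le h
  have : Nonempty (κ → V) := ⟨g⟩
  have hfun : (0 : ℝ) < (Fintype.card V : ℝ) ^ Fintype.card κ := by
    rw [← Nat.cast_pow, ← Fintype.card_fun]
    exact Nat.cast_pos.2 Fintype.card_pos
  have hinj : 1 - (Fintype.card κ : ℝ) ^ 2 / Fintype.card V ≤
      dens {g : κ → V | Injective g} := by
    rw [nnratCast_dens, card_filter_injective, Fintype.card_fun, Nat.cast_pow,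
      le_div_iff₀ hfun, mul_comm]
    simpa [sq] using
      pow_mul_one_sub_le_descFactorial_sub (k := 0) (by simpa using h)
  have hsum : (dens {g : κ → V | Injective g} : ℝ) + dens {g : κ → V | ¬ Injective g} = 1 := by
    exact_mod_cast dens_filter_add_dens_filter_not_eq_dens (s := univ) Injective |>.trans dens_univ
  linarith

lemma dens_le_dens_embedding_add (h : Fintype.card κ ≤ Fintype.card V) (F : Finset (κ → V)) :
    (F.dens : ℝ) ≤
      dens {g : κ ↪ V | ⇑g ∈ F} + (Fintype.card κ : ℝ) ^ 2 / Fintype.card V := by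
  have hinj : (dens {g ∈ F | Injective g} : ℝ) ≤ dens {g : κ ↪ V | ⇑g ∈ F} := by
    have : Nonempty (κ ↪ V) := Embedding.nonempty_of_card_le h
    have hcard : #{g ∈ F | Injective g} = #{g : κ ↪ V | ⇑g ∈ F} := by
      rw [card_filter_embedding (· ∈ F)]
      congr 1
      ext g
      simp [and_comm]
    have hle : Fintype.card (κ ↪ V) ≤ Fintype.card (κ → V) :=
      Fintype.card_le_of_injective _ DFunLike.coe_injective
    rw [nnratCast_dens, nnratCast_dens, hcard]
    gcongr
  have hnot : (dens {g ∈ F | ¬ Injective g} : ℝ) ≤ dens {g : κ → V | ¬ Injective g} :=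
    mod_cast dens_le_dens (filter_subset_filter _ (subset_univ F))
  calc (F.dens : ℝ) = dens {g ∈ F | Injective g} + dens {g ∈ F | ¬ Injective g} := by
        exact_mod_cast (dens_filter_add_dens_filter_not_eq_dens Injective).symm
    _ ≤ _ := add_le_add hinj (hnot.trans (dens_filter_not_injective_le h))

lemma dens_card_filter_block_mem_le [Nonempty (α ↪ V)]
    (hV : 4 * Fintype.card κ ^ 2 ≤ Fintype.card V) (e : ι × κ ↪ α) (F : ι → Finset (κ ↪ V))
    {c μ : ℝ} (hμ : ∑ i, ((F i).dens : ℝ) = μ) (hμ_pos : 0 < μ) (hc : 0 < c) :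
    (dens {g : α ↪ V |
        (#{i | ((Embedding.sectR i κ).trans e).trans g ∈ F i} : ℝ) ≤ μ - c * μ} : ℝ) ≤
      (1 / μ + 4 * (Fintype.card κ : ℝ) ^ 2 / Fintype.card V) / c ^ 2 := by
  let block (i : ι) : κ ↪ α := (Embedding.sectR i κ).trans e
  let A (i : ι) : Finset (α ↪ V) := {g | (block i).trans g ∈ F i}
  have hA (i : ι) : (A i).dens = (F i).dens := dens_filter_trans_mem (block i) (F i)
  have hpair : Pairwise fun i j ↦ ((A i ∩ A j).dens : ℝ) ≤
      (1 + 4 * (Fintype.card κ : ℝ) ^ 2 / Fintype.card V) * ((A i).dens * (A j).dens) := by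
    intro i j hij
    have hdisj (k l : κ) : block i k ≠ block j l := fun h ↦
      hij (Prod.ext_iff.1 (e.injective h)).1
    rw [hA, hA, ← filter_and]
    exact (dens_filter_trans_mem_and_trans_mem_le hdisj (F i) (F j)).trans <| by
      gcongr
      exact descFactorial_div_descFactorial_sub_le hV
  have hmean : ∑ i, ((A i).dens : ℝ) = μ := by simpa only [hA] using hμ
  simpa only [A, block, mem_filter_univ, add_sub_cancel_left] using
    dens_card_filter_mem_le A (by positivity) hpair hmean hμ_pos hc

lemma dens_card_filter_block_mem_lt_half_le [Nonempty ι] [Nonempty (α ↪ V)] {γ : ℝ} (hγ : 0 < γ)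
    (hV : 4 * Fintype.card κ ^ 2 ≤ Fintype.card V) (hιV : γ * Fintype.card ι ≤ Fintype.card V)
    (e : ι × κ ↪ α) (F : ι → Finset (κ ↪ V)) (hF : ∀ i, 3 / 4 * γ ≤ (F i).dens) :
    (dens {g : α ↪ V | (#{i | ((Embedding.sectR i κ).trans e).trans g ∈ F i} : ℝ) <
        γ * Fintype.card ι / 2} : ℝ) ≤
      (12 + 36 * (Fintype.card κ : ℝ) ^ 2) / (γ * Fintype.card ι) := by
  set s : ℝ := γ * Fintype.card ι with hs
  set μ : ℝ := ∑ i, ((F i).dens : ℝ) with hμ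
  have hs_pos : 0 < s := by positivity
  have hsμ : 3 / 4 * s ≤ μ := by
    calc 3 / 4 * s = ∑ _i : ι, 3 / 4 * γ := by
          rw [sum_const, card_univ, nsmul_eq_mul, hs]
          ring
      _ ≤ μ := sum_le_sum fun i _ ↦ hF i
  calc _ ≤ (dens {g : α ↪ V |
          (#{i | ((Embedding.sectR i κ).trans e).trans g ∈ F i} : ℝ) ≤ μ - 1 / 3 * μ} : ℝ) := by
        norm_cast
        refine dens_le_dens (monotone_filter_right _ fun g _ hg ↦ ?_)
        linarith
    _ ≤ (1 / μ + 4 * (Fintype.card κ : ℝ) ^ 2 / Fintype.card V) / (1 / 3) ^ 2 :=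
        dens_card_filter_block_mem_le hV e F hμ.symm (by linarith) (by norm_num)
    _ ≤ (1 / (3 / 4 * s) + 4 * (Fintype.card κ : ℝ) ^ 2 / s) / (1 / 3) ^ 2 := by gcongr
    _ = (12 + 36 * (Fintype.card κ : ℝ) ^ 2) / s := by
        field_simp
        ring

lemma dens_card_filter_comp_mem_lt_half_le [Nonempty ι] [Nonempty κ] (e : ι × κ ↪ α)
    (hα : Fintype.card α ≤ Fintype.card V) {γ : ℝ} (hγ : 0 < γ) (ℱ : ι → Finset (κ → V))
    (hℱ : ∀ i, γ ≤ (ℱ i).dens) :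
    (dens {g : α ↪ V | (#{i | (fun k ↦ g (e (i, k))) ∈ ℱ i} : ℝ) < γ * Fintype.card ι / 2} : ℝ) ≤
      (12 + 36 * (Fintype.card κ : ℝ) ^ 2) / (γ * Fintype.card ι) := by
  obtain hsmall | hlarge := lt_or_ge (γ * Fintype.card ι) (12 + 36 * (Fintype.card κ : ℝ) ^ 2)
  · calc _ ≤ (1 : ℝ) := mod_cast dens_le_one
      _ ≤ _ := (one_le_div (by positivity)).2 hsmall.le
  have : Nonempty (α ↪ V) := Embedding.nonempty_of_card_le hα
  have hικV : Fintype.card ι * Fintype.card κ ≤ Fintype.card V :=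
    (Fintype.card_prod ι κ).symm.trans_le (Fintype.card_le_of_embedding e) |>.trans hα
  have hικ : Fintype.card ι ≤ Fintype.card V :=
    (Nat.le_mul_of_pos_right _ Fintype.card_pos).trans hικV
  have hκ : Fintype.card κ ≤ Fintype.card V :=
    (Nat.le_mul_of_pos_left _ Fintype.card_pos).trans hικV
  have hγ_le : γ ≤ 1 := (hℱ (Classical.arbitrary ι)).trans (mod_cast dens_le_one)
  have hιV : γ * Fintype.card ι ≤ Fintype.card V :=
    (mul_le_of_le_one_left (Nat.cast_nonneg _) hγ_le).trans (mod_cast hικ)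
  have hV : 4 * Fintype.card κ ^ 2 ≤ Fintype.card V := by
    have : (4 * Fintype.card κ ^ 2 : ℝ) ≤ Fintype.card V := by
      linarith [sq_nonneg (Fintype.card κ : ℝ)]
    exact_mod_cast this
  have hloss : (Fintype.card κ : ℝ) ^ 2 / Fintype.card V ≤ γ / 4 := by
    have hV_pos : (0 : ℝ) < Fintype.card V := (by positivity : 0 < γ * _).trans_le hιV
    rw [div_le_iff₀ hV_pos]
    have : γ * Fintype.card ι ≤ γ * Fintype.card V := by gcongr
    linarith [sq_nonneg (Fintype.card κ : ℝ)]
  let F (i : ι) : Finset (κ ↪ V) := {h | ⇑h ∈ ℱ i}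
  have hF (i : ι) : 3 / 4 * γ ≤ (F i).dens := by
    linarith [hℱ i, dens_le_dens_embedding_add hκ (ℱ i)]
  have hcoe (g : α ↪ V) (i : ι) :
      ⇑(((Embedding.sectR i κ).trans e).trans g) = fun k ↦ g (e (i, k)) := rfl
  simpa only [F, mem_filter_univ, hcoe] using
    dens_card_filter_block_mem_lt_half_le hγ hV hιV e F hF

end RandomInjection

theorem stmt_7_general {ι κ α V : Type*} [Fintype ι] [Nonempty ι] [Fintype κ] [Nonempty κ]
    [Fintype α] [Fintype V] (e : ι × κ ↪ α) (hα : Fintype.card α ≤ Fintype.card V) {γ : ℝ}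
    (hγ : 0 < γ) (ℱ : ι → Finset (κ → V))
    (hℱ : ∀ i, γ * (Fintype.card V : ℝ) ^ Fintype.card κ ≤ #(ℱ i)) :
    (#{g ∈ {g : α → V | Injective g} |
        (#{i | (fun k ↦ g (e (i, k))) ∈ ℱ i} : ℝ) < γ * Fintype.card ι / 2} : ℝ) /
      #{g : α → V | Injective g} ≤
    (12 + 36 * (Fintype.card κ : ℝ) ^ 2) / (γ * Fintype.card ι) := by
  have : Nonempty α := .map e inferInstance
  have hV : 0 < Fintype.card V := Fintype.card_pos.trans_le hα
  have hdens (i : ι) : γ ≤ (ℱ i).dens := by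
    rw [nnratCast_dens, Fintype.card_fun, Nat.cast_pow, le_div_iff₀ (by positivity)]
    exact hℱ i
  rw [filter_filter, ← card_filter_embedding fun g ↦
      (#{i | (fun k ↦ g (e (i, k))) ∈ ℱ i} : ℝ) < γ * Fintype.card ι / 2,
    card_filter_injective, ← Fintype.card_embedding_eq, ← nnratCast_dens]
  exact dens_card_filter_comp_mem_lt_half_le e hα hγ ℱ hdens

theorem stmt_7 (f : ℕ) (hf : 0 < f) :
    ∃ C : ℝ, ∀ (m : ℕ) (V : Type) [Fintype V] [DecidableEq V] (γ : ℝ),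
      0 < γ → 0 < m → 2 * f ≤ m * f → m * f ≤ Fintype.card V →
      ∀ ℱ : Fin m → Finset (Fin f → V),
        (∀ i, γ * (Fintype.card V : ℝ) ^ f ≤ ((ℱ i).card : ℝ)) →
        (((((Finset.univ : Finset (Fin (m * f) → V)).filter Function.Injective)).filter
            (fun g => ((Finset.univ.filter (fun i : Fin m =>
              (fun j : Fin f => g (finProdFinEquiv (i, j))) ∈ ℱ i)).card : ℝ) < γ * m / 2)).card : ℝ) /
          ((((Finset.univ : Finset (Fin (m * f) → V)).filter Function.Injective).card : ℝ))
        ≤ C / (γ * m) := by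
  refine ⟨12 + 36 * f ^ 2, fun m V _ _ γ hγ hm _ hV ℱ hℱ ↦ ?_⟩
  have := Fin.pos_iff_nonempty.1 hf
  have := Fin.pos_iff_nonempty.1 hm
  convert stmt_7_general finProdFinEquiv.toEmbedding (by simpa using hV) hγ ℱ (by simpa using hℱ)
    <;> simp
end
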